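/- Let t ≥ 2, let a₁, …, a_t ∈ (0,1) with a₁ + ⋯ + a_t = 1, write a := (a₁, …, a_{t−1}), and let Δ := {x ∈ ℝ^{t−1} : x_i > 0 for all i and x₁ + ⋯ + x_{t−1} < 1}. Let ψ : ℝ^{t−1} → [0,∞) be bounded, measurable, continuous at a, with ψ(a) > 0. For each n let n₁^{(n)}, …, n_t^{(n)} be natural numbers with n₁^{(n)} + ⋯ + n_t^{(n)} = n and n_i^{(n)}/n → a_i for each i. For p ∈ Δ write p_t := 1 − p₁ − ⋯ − p_{t−1} and χ̃_n²(p) := ∑_{i=1}^t (n_i^{(n)} − p_i n)² / n_i^{(n)}. Then for every c > 0, the posterior probability (∫ over {p ∈ Δ : χ̃_n²(p) ≥ c²} of ψ(p) ∏_{i=1}^{t} p_i^{n_i^{(n)}} dp) / (∫_Δ ψ(p) ∏_{i=1}^{t} p_i^{n_i^{(n)}} dp) converges, as n → ∞, to (∫_c^∞ x^{t−2} e^{−x²/2} dx) / (∫_0^∞ x^{t−2} e^{−x²/2} dx). -/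

import Mathlib

open MeasureTheory Filter Real

/-- The full probability vector in the `(m+1)`-category multinomial model
determined by its first `m` coordinates `p`: the last coordinate is
`1 − p₁ − ⋯ − p_m`. -/
noncomputable def fullProb (m : ℕ) (p : Fin m → ℝ) : Fin (m + 1) → ℝ :=
  fun i => if h : (i : ℕ) < m then p ⟨i, h⟩ else 1 - ∑ j, p j

/-!
Write `q = k / n` for the observed frequencies and substitute `p = q + u / √n`. A second-order
expansion of the logarithm shows that the likelihood, divided by its maximum value (attained at
`q`), tends to `exp (-‖L u‖² / 2)`, where `L` is the linear map with `‖L u‖² = ∑ wᵢ² / aᵢ` and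
`w` is the zero-sum vector extending `u`. In the same coordinates `χ̃²` is `∑ wᵢ² / qᵢ`, which
tends to `‖L u‖²`, and the prior tends to the constant `ψ a`, which cancels in the quotient. The
inequality `q log (p / q) ≤ p - q - (√p - √q)²`, summed over the cells, bounds the rescaled
likelihood by a fixed Gaussian, so dominated convergence applies; polar coordinates for the norm
`‖L u‖` turn the limiting integrals into the chi integrals.
-/

open Asymptotics Set Topology

section Logarithm

lemma mul_log_div_le_sub_sq_sqrt_sub {p q : ℝ} (hp : 0 < p) (hq : 0 < q) :
    q * log (p / q) ≤ p - q - (√p - √q) ^ 2 := by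
  have hlog : log (p / q) ≤ 2 * (√p / √q - 1) := by
    have h := log_le_sub_one_of_pos (div_pos (sqrt_pos.2 hp) (sqrt_pos.2 hq))
    rw [← sqrt_div hp.le, log_sqrt (div_pos hp hq).le, sqrt_div hp.le] at h
    linarith
  calc q * log (p / q) ≤ q * (2 * (√p / √q - 1)) := by gcongr
    _ = 2 * (√p * √q) - 2 * q := by
      nth_rw 1 [← mul_self_sqrt hq.le]
      have := (sqrt_pos.2 hq).ne'
      field_simp
      rw [mul_sub, mul_self_sqrt hq.le]
    _ = p - q - (√p - √q) ^ 2 := by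
      rw [sub_sq, sq_sqrt hp.le, sq_sqrt hq.le]
      ring

lemma sq_sub_le_four_mul_sq_sqrt_sub {p q : ℝ} (hp : p ∈ Icc 0 1) (hq : q ∈ Icc 0 1) :
    (p - q) ^ 2 ≤ 4 * (√p - √q) ^ 2 := by
  have hsum : √p + √q ≤ 2 := by linarith [sqrt_le_one.2 hp.2, sqrt_le_one.2 hq.2]
  calc (p - q) ^ 2 = (√p + √q) ^ 2 * (√p - √q) ^ 2 := by
        rw [← mul_pow, ← sq_sub_sq, sq_sqrt hp.1, sq_sqrt hq.1]
    _ ≤ 2 ^ 2 * (√p - √q) ^ 2 := by gcongr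
    _ = 4 * (√p - √q) ^ 2 := by norm_num

lemma prod_div_pow_le_exp_neg_sum_sq {ι : Type*} [Fintype ι] {p q : ι → ℝ} {n : ℕ} {k : ι → ℕ}
    (hp : ∀ i, 0 < p i) (hp_sum : ∑ i, p i = 1) (hq : ∀ i, 0 < q i) (hq_sum : ∑ i, q i = 1)
    (hk : ∀ i, (k i : ℝ) = n * q i) :
    ∏ i, (p i / q i) ^ k i ≤ exp (-(n / 4 * ∑ i, (p i - q i) ^ 2)) := by
  have mem_Icc {f : ι → ℝ} (hf : ∀ i, 0 < f i) (hf_sum : ∑ i, f i = 1) (i : ι) :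
      f i ∈ Icc 0 1 :=
    ⟨(hf i).le, hf_sum ▸ Finset.single_le_sum (fun j _ => (hf j).le) (Finset.mem_univ i)⟩
  have hcell (i : ι) : (p i / q i) ^ k i ≤ exp (n * (p i - q i - (p i - q i) ^ 2 / 4)) := by
    rw [← exp_log (div_pos (hp i) (hq i)), ← exp_nat_mul, hk, mul_assoc]
    gcongr
    linarith [mul_log_div_le_sub_sq_sqrt_sub (hp i) (hq i),
      sq_sub_le_four_mul_sq_sqrt_sub (mem_Icc hp hp_sum i) (mem_Icc hq hq_sum i)]
  calc ∏ i, (p i / q i) ^ k i ≤ ∏ i, exp (n * (p i - q i - (p i - q i) ^ 2 / 4)) :=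
        Finset.prod_le_prod (fun i _ => pow_nonneg (div_pos (hp i) (hq i)).le _)
          fun i _ => hcell i
    _ = exp (-(n / 4 * ∑ i, (p i - q i) ^ 2)) := by
        rw [← exp_sum, ← Finset.mul_sum, Finset.sum_sub_distrib, Finset.sum_sub_distrib, hp_sum,
          hq_sum, ← Finset.sum_div]
        ring_nf

lemma isLittleO_log_one_add_sub_add_sq_div_two :
    (fun x : ℝ => log (1 + x) - x + x ^ 2 / 2) =o[𝓝 0] fun x => x ^ 2 := by
  refine IsBigO.trans_isLittleO (g := fun x : ℝ => x ^ 3) (.of_bound 2 ?_)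
    (isLittleO_pow_pow (by norm_num))
  filter_upwards [Metric.ball_mem_nhds 0 (show (0 : ℝ) < 1 / 2 by norm_num)] with x hx
  have hx : |x| < 1 / 2 := by simpa using hx
  have h := abs_log_sub_add_sum_range_le (x := -x) (by rw [abs_neg]; linarith) 2
  simp only [Finset.sum_range_succ, Finset.sum_range_zero, abs_neg, sub_neg_eq_add] at h
  calc |log (1 + x) - x + x ^ 2 / 2| ≤ |x| ^ 3 / (1 - |x|) := by
        convert h using 2
        push_cast
        ring
    _ ≤ |x| ^ 3 / (1 / 2) := by gcongr; linarith
    _ = 2 * ‖x ^ 3‖ := by rw [norm_pow, norm_eq_abs]; ring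

lemma tendsto_mul_log_one_add_sub {ι : Type*} {l : Filter ι} {k s : ι → ℝ} {a : ℝ} (w : ℝ)
    (ha : a ≠ 0) (hs : Tendsto s l atTop) (hk : Tendsto (fun x => k x / s x ^ 2) l (𝓝 a)) :
    Tendsto (fun x => k x * log (1 + s x * w / k x) - s x * w) l (𝓝 (-(w ^ 2 / a) / 2)) := by
  have hs_ne : ∀ᶠ x in l, s x ≠ 0 := hs.eventually_ne_atTop 0
  have hk_ne : ∀ᶠ x in l, k x ≠ 0 := by
    filter_upwards [hk.eventually_ne ha] with x hx h
    simp [h] at hx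
  have hx : Tendsto (fun x => s x * w / k x) l (𝓝 0) := by
    have h : Tendsto (fun x => w / s x / (k x / s x ^ 2)) l (𝓝 (0 / a)) :=
      (hs.const_div_atTop w).div hk ha
    rw [zero_div] at h
    refine h.congr' ?_
    filter_upwards [hs_ne, hk_ne] with x hsx hkx
    field_simp
  have hkx_sq : Tendsto (fun x => k x * (s x * w / k x) ^ 2) l (𝓝 (w ^ 2 / a)) := by
    refine ((tendsto_const_nhds (x := w ^ 2)).div hk ha).congr' ?_
    filter_upwards [hs_ne, hk_ne] with x hsx hkx
    simp only [Pi.div_apply]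
    field_simp
  have hrem : Tendsto (fun x => k x * (log (1 + s x * w / k x) - s x * w / k x
      + (s x * w / k x) ^ 2 / 2)) l (𝓝 0) :=
    (isLittleO_one_iff ℝ).1 <|
      ((isBigO_refl k l).mul_isLittleO
        (isLittleO_log_one_add_sub_add_sq_div_two.comp_tendsto hx)).trans_isBigO
        (hkx_sq.isBigO_one ℝ)
  convert (hrem.sub (hkx_sq.div_const 2)).congr' ?_ using 2
  · ring
  · filter_upwards [hk_ne] with x hkx
    field_simp
    ring

end Logarithm

section RadialIntegral

variable {E F G : Type*} [NormedAddCommGroup E] [NormedSpace ℝ E] [Nontrivial E]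
  [FiniteDimensional ℝ E] [MeasurableSpace E] [BorelSpace E] (μ : Measure E)
  [μ.IsAddHaarMeasure] [NormedAddCommGroup F] [NormedSpace ℝ F] [NormedAddCommGroup G]
  [NormedSpace ℝ G] {L : E →ₗ[ℝ] F}

lemma exists_integral_norm_comp_eq (hL : Function.Injective L) :
    ∃ C : ℝ, 0 < C ∧ ∀ f : ℝ → G,
      ∫ u, f ‖L u‖ ∂μ = C • ∫ y in Ioi (0 : ℝ), y ^ (Module.finrank ℝ E - 1) • f y := by
  borelize ↥(LinearMap.range L)
  let e := (LinearEquiv.ofInjective L hL).toContinuousLinearEquiv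
  have : Nontrivial (LinearMap.range L) := e.toEquiv.symm.nontrivial
  have : (μ.map e).IsAddHaarMeasure := e.isAddHaarMeasure_map μ
  have hball : 0 < (μ.map e).real (Metric.ball 0 1) :=
    ENNReal.toReal_pos (Metric.measure_ball_pos _ _ one_pos).ne' measure_ball_lt_top.ne
  have hdim : (0 : ℝ) < Module.finrank ℝ E := by exact_mod_cast Module.finrank_pos
  refine ⟨Module.finrank ℝ E * (μ.map e).real (Metric.ball 0 1), mul_pos hdim hball, fun f => ?_⟩
  calc ∫ u, f ‖L u‖ ∂μ = ∫ v, f ‖v‖ ∂μ.map e :=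
        (e.toHomeomorph.measurableEmbedding.integral_map fun v => f ‖v‖).symm
    _ = _ := by
        rw [integral_fun_norm_addHaar, ← e.toLinearEquiv.finrank_eq]
        simp [mul_smul, ← Nat.cast_smul_eq_nsmul ℝ]

lemma ae_norm_comp_ne (hL : Function.Injective L) (r : ℝ) : ∀ᵐ u ∂μ, ‖L u‖ ≠ r := by
  borelize ↥(LinearMap.range L)
  let e := (LinearEquiv.ofInjective L hL).toContinuousLinearEquiv
  have : Nontrivial (LinearMap.range L) := e.toEquiv.symm.nontrivial
  have : (μ.map e).IsAddHaarMeasure := e.isAddHaarMeasure_map μ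
  have hsphere : ∀ᵐ v ∂μ.map e, ‖v‖ ≠ r := by
    simpa [ae_iff, Metric.sphere, dist_zero_right] using Measure.addHaar_sphere (μ.map e) 0 r
  exact ae_of_ae_map e.continuous.aemeasurable hsphere

end RadialIntegral

section GaussianIntegral

lemma integrable_exp_neg_mul_sum_sq (κ : Type*) [Fintype κ] {b : ℝ} (hb : 0 < b) :
    Integrable fun u : κ → ℝ => exp (-(b * ∑ i, u i ^ 2)) := by
  simp only [Finset.mul_sum, ← Finset.sum_neg_distrib, exp_sum, ← neg_mul]
  exact .fintype_prod (f := fun _ x => exp (-b * x ^ 2)) fun _ => integrable_exp_neg_mul_sq hb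

lemma setIntegral_Ioi_smul_indicator_Ici {G : Type*} [NormedAddCommGroup G] [NormedSpace ℝ G]
    (f : ℝ → ℝ) (g : ℝ → G) {b c : ℝ} (hbc : b ≤ c) :
    ∫ y in Ioi b, f y • (Ici c).indicator g y = ∫ y in Ioi c, f y • g y := by
  have hset : (Ioi b ∩ Ici c : Set ℝ) =ᵐ[volume] Ioi c := by
    simpa [Ioi_inter_Ioi, hbc] using
      (ae_eq_refl (Ioi b)).inter (Ioi_ae_eq_Ici (μ := volume) (a := c)).symm
  simp only [← indicator_smul_apply]
  rw [setIntegral_indicator measurableSet_Ici, setIntegral_congr_set hset]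

lemma integral_pow_mul_exp_neg_sq_div_two_pos (d : ℕ) :
    0 < ∫ x in Ioi (0 : ℝ), x ^ d * exp (-x ^ 2 / 2) := by
  have heq : ∫ x in Ioi (0 : ℝ), x ^ d * exp (-x ^ 2 / 2) =
      ∫ x in Ioi (0 : ℝ), x ^ (d : ℝ) * exp (-(1 / 2) * x ^ (2 : ℝ)) := by
    simp only [rpow_natCast, rpow_two]
    ring_nf
  have hd : (-1 : ℝ) < d := by linarith [(Nat.cast_nonneg d : (0 : ℝ) ≤ d)]
  rw [heq, integral_rpow_mul_exp_neg_mul_rpow two_pos hd one_half_pos]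
  have := Gamma_pos_of_pos (s := ((d : ℝ) + 1) / 2) (by positivity)
  positivity

end GaussianIntegral

section ProbabilityVector

variable (m : ℕ)

@[simp]
lemma fullProb_castSucc (p : Fin m → ℝ) (i : Fin m) : fullProb m p i.castSucc = p i := by
  simp [fullProb]

@[simp]
lemma fullProb_last (p : Fin m → ℝ) : fullProb m p (Fin.last m) = 1 - ∑ j, p j := by
  simp [fullProb]

lemma sum_fullProb (p : Fin m → ℝ) : ∑ i, fullProb m p i = 1 := by
  simp [Fin.sum_univ_castSucc]

lemma forall_fullProb_pos_iff (p : Fin m → ℝ) :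
    (∀ i, 0 < fullProb m p i) ↔ (∀ i, 0 < p i) ∧ ∑ i, p i < 1 := by
  simp [Fin.forall_fin_succ']

lemma fullProb_comp_castSucc {q : Fin (m + 1) → ℝ} (hq : ∑ i, q i = 1) :
    fullProb m (fun j => q j.castSucc) = q := by
  rw [Fin.sum_univ_castSucc] at hq
  ext i
  induction i using Fin.lastCases with
  | last => rw [fullProb_last]; linarith
  | cast i => rw [fullProb_castSucc]

@[fun_prop]
lemma measurable_fullProb_apply (i : Fin (m + 1)) : Measurable fun p => fullProb m p i := by
  induction i using Fin.lastCases with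
  | last => simp only [fullProb_last]; fun_prop
  | cast i => simp only [fullProb_castSucc]; fun_prop

/-- The linear part of the affine map `fullProb m`: it extends `u` to the vector with coordinate
sum zero. -/
noncomputable def fullProbLinear : (Fin m → ℝ) →ₗ[ℝ] Fin (m + 1) → ℝ :=
  LinearMap.pi (Fin.lastCases (-∑ j, LinearMap.proj j) LinearMap.proj)

@[simp]
lemma fullProbLinear_castSucc (u : Fin m → ℝ) (i : Fin m) :
    fullProbLinear m u i.castSucc = u i := by
  simp [fullProbLinear]

@[simp]
lemma fullProbLinear_last (u : Fin m → ℝ) :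
    fullProbLinear m u (Fin.last m) = -∑ j, u j := by
  simp [fullProbLinear]

lemma sum_fullProbLinear (u : Fin m → ℝ) : ∑ i, fullProbLinear m u i = 0 := by
  simp [Fin.sum_univ_castSucc]

lemma fullProb_add (p u : Fin m → ℝ) : fullProb m (p + u) = fullProb m p + fullProbLinear m u := by
  ext i
  induction i using Fin.lastCases with
  | last => simp [Finset.sum_add_distrib]; ring
  | cast i => simp

lemma sum_sq_le_sum_sq_fullProbLinear (u : Fin m → ℝ) :
    ∑ i, u i ^ 2 ≤ ∑ i, fullProbLinear m u i ^ 2 := by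
  simp only [Fin.sum_univ_castSucc, fullProbLinear_castSucc]
  exact le_add_of_nonneg_right (sq_nonneg _)

variable {m} (a : Fin (m + 1) → ℝ)

/-- The embedding that turns the limit `∑ i, w i ^ 2 / a i` of the statistic `χ̃²`, with
`w = fullProbLinear m u`, into a squared Euclidean norm. -/
noncomputable def chiSqEmbedding : (Fin m → ℝ) →ₗ[ℝ] EuclideanSpace ℝ (Fin (m + 1)) :=
  (WithLp.linearEquiv 2 ℝ (Fin (m + 1) → ℝ)).symm.toLinearMap ∘ₗ
    LinearMap.pi fun i => (√(a i))⁻¹ • LinearMap.proj i ∘ₗ fullProbLinear m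

variable {a}

lemma norm_chiSqEmbedding_sq (ha : ∀ i, 0 ≤ a i) (u : Fin m → ℝ) :
    ‖chiSqEmbedding a u‖ ^ 2 = ∑ i, fullProbLinear m u i ^ 2 / a i := by
  simp [EuclideanSpace.norm_sq_eq, chiSqEmbedding, mul_pow, sq_sqrt (ha _), div_eq_inv_mul]

lemma chiSqEmbedding_injective (ha : ∀ i : Fin m, 0 < a i.castSucc) :
    Function.Injective (chiSqEmbedding a) := by
  intro u v h
  ext i
  have hi := congrArg (fun x => x i.castSucc) h
  simpa [chiSqEmbedding, (sqrt_pos.2 (ha i)).ne'] using hi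

end ProbabilityVector

section LocalPosterior

variable {m : ℕ} (n : ℕ) (k : Fin (m + 1) → ℕ)

/-- The multinomial likelihood at `p` of the counts `k` out of `n`, divided by its maximal value,
which is attained at the observed frequencies `k / n`. -/
noncomputable def likelihoodRatio (p : Fin m → ℝ) : ℝ :=
  ∏ i, (fullProb m p i / (k i / n)) ^ k i

/-- The part of the open probability simplex on which Neyman's statistic `χ̃²` for the counts `k`
out of `n` is at least `c ^ 2`. -/
def chiSqRegion (c : ℝ) : Set (Fin m → ℝ) :=
  {p | ((∀ i, 0 < p i) ∧ ∑ i, p i < 1) ∧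
    c ^ 2 ≤ ∑ i, ((k i : ℝ) - fullProb m p i * n) ^ 2 / (k i : ℝ)}

/-- The parameter point with local coordinate `u`: the observed frequencies `k / n` of the first
`m` cells, displaced by `u / √n`. -/
noncomputable def localParam (u : Fin m → ℝ) : Fin m → ℝ :=
  (fun j => (k j.castSucc : ℝ) / n) + (√n)⁻¹ • u

/-- The unnormalised posterior density of prior `ψ` in the local coordinate, restricted to
`chiSqRegion n k c`. -/
noncomputable def localPosterior (ψ : (Fin m → ℝ) → ℝ) (c : ℝ) (u : Fin m → ℝ) : ℝ :=
  (chiSqRegion n k c).indicator (fun p => ψ p * likelihoodRatio n k p) (localParam n k u)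

lemma measurableSet_chiSqRegion (c : ℝ) : MeasurableSet (chiSqRegion n k c) := by
  have hpos : MeasurableSet {p | ∀ i, 0 < fullProb m p i} := by
    rw [ofPred_forall]
    exact .iInter fun i => measurableSet_lt measurable_const (measurable_fullProb_apply m i)
  have hstat : MeasurableSet
      {p | c ^ 2 ≤ ∑ i, ((k i : ℝ) - fullProb m p i * n) ^ 2 / (k i : ℝ)} :=
    measurableSet_le measurable_const (by fun_prop)
  simp only [chiSqRegion, ← forall_fullProb_pos_iff]
  exact hpos.inter hstat

lemma measurable_localPosterior {ψ : (Fin m → ℝ) → ℝ} (hψ : Measurable ψ) (c : ℝ) :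
    Measurable (localPosterior n k ψ c) := by
  have hratio : Measurable (likelihoodRatio (m := m) n k) := by
    unfold likelihoodRatio
    fun_prop
  have hparam : Measurable (localParam (m := m) n k) := by
    unfold localParam
    fun_prop
  exact ((hψ.mul hratio).indicator (measurableSet_chiSqRegion n k c)).comp hparam

lemma chiSqRegion_zero : chiSqRegion n k 0 = {p | (∀ i, 0 < p i) ∧ ∑ i, p i < 1} := by
  ext p
  refine and_iff_left ?_
  rw [zero_pow two_ne_zero]
  positivity

variable {n k}

lemma fullProb_localParam (hn : 0 < n) (hk_sum : ∑ i, k i = n) (u : Fin m → ℝ) (i : Fin (m + 1)) :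
    fullProb m (localParam n k u) i = k i / n + fullProbLinear m u i / √n := by
  have hfreq_sum : ∑ i, (k i : ℝ) / n = 1 := by
    rw [← Finset.sum_div, ← Nat.cast_sum, hk_sum, div_self (by positivity)]
  rw [localParam, fullProb_add, fullProb_comp_castSucc m hfreq_sum]
  simp [div_eq_inv_mul]

lemma localParam_mem_chiSqRegion_iff (hn : 0 < n) (hk_sum : ∑ i, k i = n) (c : ℝ)
    (u : Fin m → ℝ) :
    localParam n k u ∈ chiSqRegion n k c ↔
      (∀ i, 0 < (k i : ℝ) / n + fullProbLinear m u i / √n) ∧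
        c ^ 2 ≤ ∑ i, fullProbLinear m u i ^ 2 / ((k i : ℝ) / n) := by
  have hcell (i : Fin (m + 1)) :
      ((k i : ℝ) - (k i / n + fullProbLinear m u i / √n) * n) ^ 2 / k i =
        fullProbLinear m u i ^ 2 / ((k i : ℝ) / n) := by
    rw [add_mul, div_mul_cancel₀ _ (by positivity), sub_add_cancel_left, neg_sq, mul_pow, div_pow,
      sq_sqrt n.cast_nonneg]
    field_simp
  simp only [chiSqRegion, mem_ofPred_eq, ← forall_fullProb_pos_iff,
    fullProb_localParam hn hk_sum, hcell]

lemma likelihoodRatio_localParam_le (hn : 0 < n) (hk : ∀ i, 0 < k i) (hk_sum : ∑ i, k i = n)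
    {u : Fin m → ℝ} (hu : ∀ i, 0 < fullProb m (localParam n k u) i) :
    likelihoodRatio n k (localParam n k u) ≤ exp (-(1 / 4 * ∑ i, u i ^ 2)) := by
  have hsq (i : Fin (m + 1)) : (fullProb m (localParam n k u) i - k i / n) ^ 2 =
      fullProbLinear m u i ^ 2 / n := by
    rw [fullProb_localParam hn hk_sum, add_sub_cancel_left, div_pow, sq_sqrt n.cast_nonneg]
  calc likelihoodRatio n k (localParam n k u)
      ≤ exp (-(n / 4 * ∑ i, (fullProb m (localParam n k u) i - k i / n) ^ 2)) :=
        prod_div_pow_le_exp_neg_sum_sq hu (sum_fullProb m _)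
          (fun i => div_pos (by exact_mod_cast hk i) (by exact_mod_cast hn))
          (by rw [← Finset.sum_div, ← Nat.cast_sum, hk_sum, div_self (by positivity)])
          (fun i => (mul_div_cancel₀ _ (by positivity)).symm)
    _ = exp (-(1 / 4 * ∑ i, fullProbLinear m u i ^ 2)) := by
        simp only [hsq, ← Finset.sum_div]
        field_simp
    _ ≤ exp (-(1 / 4 * ∑ i, u i ^ 2)) := by
        gcongr
        exact sum_sq_le_sum_sq_fullProbLinear m u

lemma abs_localPosterior_le (hn : 0 < n) (hk : ∀ i, 0 < k i) (hk_sum : ∑ i, k i = n)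
    {ψ : (Fin m → ℝ) → ℝ} {B : ℝ} (hψ : ∀ p, |ψ p| ≤ B) (c : ℝ) (u : Fin m → ℝ) :
    |localPosterior n k ψ c u| ≤ B * exp (-(1 / 4 * ∑ i, u i ^ 2)) := by
  have hB : 0 ≤ B := (abs_nonneg _).trans (hψ 0)
  by_cases hmem : localParam n k u ∈ chiSqRegion n k c
  · have hpos := (forall_fullProb_pos_iff m _).2 hmem.1
    have hratio : 0 ≤ likelihoodRatio n k (localParam n k u) :=
      Finset.prod_nonneg fun i _ => pow_nonneg (div_nonneg (hpos i).le (by positivity)) _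
    rw [localPosterior, indicator_of_mem hmem, abs_mul, abs_of_nonneg hratio]
    exact mul_le_mul (hψ _) (likelihoodRatio_localParam_le hn hk hk_sum hpos) hratio hB
  · rw [localPosterior, indicator_of_notMem hmem, abs_zero]
    positivity

lemma setIntegral_chiSqRegion_eq (hn : 0 < n) (hk : ∀ i, 0 < k i) (ψ : (Fin m → ℝ) → ℝ) (c : ℝ) :
    ∫ p in chiSqRegion n k c, ψ p * ∏ i, fullProb m p i ^ k i =
      ((∏ i, ((k i : ℝ) / n) ^ k i) / √n ^ m) * ∫ u, localPosterior n k ψ c u := by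
  have hmax : ∏ i, ((k i : ℝ) / n) ^ k i ≠ 0 :=
    Finset.prod_ne_zero_iff.2 fun i _ => by have := hk i; positivity
  have hratio (p : Fin m → ℝ) : ∏ i, fullProb m p i ^ k i =
      (∏ i, ((k i : ℝ) / n) ^ k i) * likelihoodRatio n k p := by
    simp only [likelihoodRatio, div_pow (fullProb m p _), Finset.prod_div_distrib]
    field_simp
  set f := (chiSqRegion n k c).indicator fun p => ψ p * likelihoodRatio n k p
  have hsubst : ∫ u, localPosterior n k ψ c u = √n ^ m * ∫ p, f p := by
    have h := Measure.integral_comp_inv_smul volume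
      (fun v : Fin m → ℝ => f ((fun j => (k j.castSucc : ℝ) / n) + v)) √n
    rwa [integral_add_left_eq_self, Module.finrank_fin_fun, smul_eq_mul,
      abs_of_nonneg (by positivity)] at h
  calc ∫ p in chiSqRegion n k c, ψ p * ∏ i, fullProb m p i ^ k i
      = (∏ i, ((k i : ℝ) / n) ^ k i) * ∫ p, f p := by
        rw [integral_indicator (measurableSet_chiSqRegion n k c), ← integral_const_mul]
        simp only [hratio, mul_left_comm]
    _ = _ := by
        rw [hsubst]
        field_simp

end LocalPosterior

section Limits

variable {ι : Type*} {l : Filter ι} {m : ℕ} {a : Fin (m + 1) → ℝ} {T : ι → ℕ}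
  {N : ι → Fin (m + 1) → ℕ} {ψ : (Fin m → ℝ) → ℝ}

lemma eventually_counts_pos (ha : ∀ i, 0 < a i)
    (hfreq : ∀ i, Tendsto (fun x => (N x i : ℝ) / T x) l (𝓝 (a i))) :
    ∀ᶠ x in l, 0 < T x ∧ ∀ i, 0 < N x i := by
  filter_upwards [eventually_all.2 fun i => (hfreq i).eventually_const_lt (ha i)] with x hx
  refine ⟨Nat.pos_of_ne_zero fun h => ?_, fun i => Nat.pos_of_ne_zero fun h => ?_⟩
  · simpa [h] using hx 0
  · simpa [h] using hx i

lemma tendsto_sqrt_natCast (hT : Tendsto T l atTop) : Tendsto (fun x => √(T x : ℝ)) l atTop :=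
  tendsto_sqrt_atTop.comp (tendsto_natCast_atTop_atTop.comp hT)

lemma tendsto_localParam (hT : Tendsto T l atTop)
    (hfreq : ∀ i, Tendsto (fun x => (N x i : ℝ) / T x) l (𝓝 (a i))) (u : Fin m → ℝ) :
    Tendsto (fun x => localParam (T x) (N x) u) l (𝓝 fun i => a i.castSucc) := by
  refine tendsto_pi_nhds.2 fun i => ?_
  simpa [localParam] using
    (hfreq i.castSucc).add ((tendsto_sqrt_natCast hT).inv_tendsto_atTop.mul_const (u i))

lemma tendsto_sum_sq_div_freq (ha : ∀ i, 0 < a i)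
    (hfreq : ∀ i, Tendsto (fun x => (N x i : ℝ) / T x) l (𝓝 (a i))) (u : Fin m → ℝ) :
    Tendsto (fun x => ∑ i, fullProbLinear m u i ^ 2 / ((N x i : ℝ) / T x)) l
      (𝓝 (‖chiSqEmbedding a u‖ ^ 2)) := by
  rw [norm_chiSqEmbedding_sq fun i => (ha i).le]
  exact tendsto_finsetSum _ fun i _ => tendsto_const_nhds.div (hfreq i) (ha i).ne'

lemma eventually_forall_freq_add_pos (ha : ∀ i, 0 < a i) (hT : Tendsto T l atTop)
    (hfreq : ∀ i, Tendsto (fun x => (N x i : ℝ) / T x) l (𝓝 (a i))) (u : Fin m → ℝ) :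
    ∀ᶠ x in l, ∀ i, 0 < (N x i : ℝ) / T x + fullProbLinear m u i / √(T x) := by
  refine eventually_all.2 fun i => ?_
  have h := (hfreq i).add ((tendsto_sqrt_natCast hT).const_div_atTop (fullProbLinear m u i))
  rw [add_zero] at h
  exact h.eventually_const_lt (ha i)

lemma tendsto_likelihoodRatio_localParam (ha : ∀ i, 0 < a i) (hT : Tendsto T l atTop)
    (hN : ∀ x, ∑ i, N x i = T x)
    (hfreq : ∀ i, Tendsto (fun x => (N x i : ℝ) / T x) l (𝓝 (a i))) (u : Fin m → ℝ) :
    Tendsto (fun x => likelihoodRatio (T x) (N x) (localParam (T x) (N x) u)) l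
      (𝓝 (exp (-‖chiSqEmbedding a u‖ ^ 2 / 2))) := by
  set w := fullProbLinear m u
  have hlog : Tendsto (fun x => ∑ i, (N x i * log (1 + √(T x) * w i / N x i) - √(T x) * w i)) l
      (𝓝 (-‖chiSqEmbedding a u‖ ^ 2 / 2)) := by
    rw [norm_chiSqEmbedding_sq fun i => (ha i).le, ← Finset.sum_neg_distrib, Finset.sum_div]
    refine tendsto_finsetSum _ fun i _ =>
      tendsto_mul_log_one_add_sub _ (ha i).ne' (tendsto_sqrt_natCast hT) ?_
    simpa only [sq_sqrt (Nat.cast_nonneg _)] using hfreq i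
  refine ((continuous_exp.tendsto _).comp hlog).congr' ?_
  filter_upwards [eventually_counts_pos ha hfreq, eventually_forall_freq_add_pos ha hT hfreq u]
    with x ⟨hTx, hNx⟩ hpos
  have hcell (i : Fin (m + 1)) : fullProb m (localParam (T x) (N x) u) i / (N x i / T x) =
      1 + √(T x) * w i / N x i := by
    have hi : (N x i : ℝ) ≠ 0 := by exact_mod_cast (hNx i).ne'
    rw [fullProb_localParam hTx (hN x)]
    field_simp
    linear_combination (-w i) * sq_sqrt (Nat.cast_nonneg (T x) : (0 : ℝ) ≤ T x)
  have hcell_pos (i : Fin (m + 1)) : 0 < 1 + √(T x) * w i / N x i := by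
    rw [← hcell, fullProb_localParam hTx (hN x)]
    exact div_pos (hpos i) (div_pos (by exact_mod_cast hNx i) (by exact_mod_cast hTx))
  rw [Function.comp_apply, Finset.sum_sub_distrib, ← Finset.mul_sum, sum_fullProbLinear, mul_zero,
    sub_zero, exp_sum]
  simp only [likelihoodRatio, hcell, exp_nat_mul, exp_log (hcell_pos _)]

lemma tendsto_localPosterior (ha : ∀ i, 0 < a i)
    (hψ_cont : ContinuousAt ψ fun i => a i.castSucc) (hT : Tendsto T l atTop)
    (hN : ∀ x, ∑ i, N x i = T x)
    (hfreq : ∀ i, Tendsto (fun x => (N x i : ℝ) / T x) l (𝓝 (a i)))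
    {c : ℝ} (hc : 0 ≤ c) {u : Fin m → ℝ} (hu : ‖chiSqEmbedding a u‖ ≠ c) :
    Tendsto (fun x => localPosterior (T x) (N x) ψ c u) l
      (𝓝 (ψ (fun i => a i.castSucc) *
        (Ici c).indicator (fun y => exp (-y ^ 2 / 2)) ‖chiSqEmbedding a u‖)) := by
  have hstat := tendsto_sum_sq_div_freq ha hfreq u
  have hcounts := eventually_counts_pos ha hfreq
  rcases hu.lt_or_gt with hlt | hlt
  · rw [indicator_of_notMem (notMem_Ici.2 hlt), mul_zero]
    refine tendsto_const_nhds.congr' ?_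
    filter_upwards [hcounts,
      hstat.eventually_lt_const (pow_lt_pow_left₀ hlt (norm_nonneg _) two_ne_zero)]
      with x ⟨hTx, _⟩ hx
    have hmem : localParam (T x) (N x) u ∉ chiSqRegion (T x) (N x) c := fun h =>
      hx.not_ge ((localParam_mem_chiSqRegion_iff hTx (hN x) c u).1 h).2
    exact (indicator_of_notMem hmem _).symm
  · rw [indicator_of_mem (mem_Ici.2 hlt.le)]
    refine ((hψ_cont.tendsto.comp (tendsto_localParam hT hfreq u)).mul
      (tendsto_likelihoodRatio_localParam ha hT hN hfreq u)).congr' ?_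
    filter_upwards [hcounts, eventually_forall_freq_add_pos ha hT hfreq u,
      hstat.eventually_const_lt (pow_lt_pow_left₀ hlt hc two_ne_zero)] with x ⟨hTx, _⟩ hpos hx
    have hmem := (localParam_mem_chiSqRegion_iff hTx (hN x) c u).2 ⟨hpos, hx.le⟩
    rw [localPosterior, indicator_of_mem hmem]
    rfl

lemma tendsto_integral_localPosterior [l.IsCountablyGenerated] (hm : 1 ≤ m) (ha : ∀ i, 0 < a i)
    (hψ_meas : Measurable ψ) {B : ℝ} (hψ_bdd : ∀ p, |ψ p| ≤ B)
    (hψ_cont : ContinuousAt ψ fun i => a i.castSucc) (hT : Tendsto T l atTop)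
    (hN : ∀ x, ∑ i, N x i = T x)
    (hfreq : ∀ i, Tendsto (fun x => (N x i : ℝ) / T x) l (𝓝 (a i))) {c : ℝ} (hc : 0 ≤ c) :
    Tendsto (fun x => ∫ u, localPosterior (T x) (N x) ψ c u) l
      (𝓝 (ψ (fun i => a i.castSucc) *
        ∫ u, (Ici c).indicator (fun y => exp (-y ^ 2 / 2)) ‖chiSqEmbedding a u‖)) := by
  have : Nonempty (Fin m) := ⟨⟨0, hm⟩⟩
  rw [← integral_const_mul]
  refine tendsto_integral_filter_of_dominated_convergence
    (fun u => B * exp (-(1 / 4 * ∑ i, u i ^ 2))) ?_ ?_ ?_ ?_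
  · exact .of_forall fun x => (measurable_localPosterior _ _ hψ_meas c).aestronglyMeasurable
  · filter_upwards [eventually_counts_pos ha hfreq] with x ⟨hTx, hNx⟩
    exact .of_forall (abs_localPosterior_le hTx hNx (hN x) hψ_bdd c)
  · exact (integrable_exp_neg_mul_sum_sq _ (by norm_num)).const_mul B
  · filter_upwards [ae_norm_comp_ne volume (chiSqEmbedding_injective fun i => ha _) c] with u hu
    exact tendsto_localPosterior ha hψ_cont hT hN hfreq hc hu

end Limits

theorem neyman_posterior_chisq_general {ι : Type*} {l : Filter ι} [l.IsCountablyGenerated]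
    {m : ℕ} (hm : 1 ≤ m) {a : Fin (m + 1) → ℝ} (ha : ∀ i, 0 < a i)
    {ψ : (Fin m → ℝ) → ℝ} (hψ_meas : Measurable ψ) {B : ℝ} (hψ_bdd : ∀ p, |ψ p| ≤ B)
    (hψ_cont : ContinuousAt ψ fun i => a i.castSucc) (hψ_ne : ψ (fun i => a i.castSucc) ≠ 0)
    {T : ι → ℕ} (hT : Tendsto T l atTop) {N : ι → Fin (m + 1) → ℕ}
    (hN : ∀ x, ∑ i, N x i = T x)
    (hfreq : ∀ i, Tendsto (fun x => (N x i : ℝ) / T x) l (𝓝 (a i))) {c : ℝ} (hc : 0 ≤ c) :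
    Tendsto (fun x =>
      (∫ p in {p : Fin m → ℝ | ((∀ i, 0 < p i) ∧ ∑ i, p i < 1) ∧
            c ^ 2 ≤ ∑ i, ((N x i : ℝ) - fullProb m p i * T x) ^ 2 / (N x i : ℝ)},
          ψ p * ∏ i, fullProb m p i ^ N x i) /
      (∫ p in {p : Fin m → ℝ | (∀ i, 0 < p i) ∧ ∑ i, p i < 1},
          ψ p * ∏ i, fullProb m p i ^ N x i))
      l
      (𝓝 ((∫ x in Ioi c, x ^ (m - 1) * exp (-x ^ 2 / 2)) /
           (∫ x in Ioi (0 : ℝ), x ^ (m - 1) * exp (-x ^ 2 / 2)))) := by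
  have : Nonempty (Fin m) := ⟨⟨0, hm⟩⟩
  obtain ⟨C, hC, hradial⟩ :=
    exists_integral_norm_comp_eq (G := ℝ) volume (chiSqEmbedding_injective (a := a) fun i => ha _)
  have hlim {d : ℝ} (hd : 0 ≤ d) : Tendsto (fun x => ∫ u, localPosterior (T x) (N x) ψ d u) l
      (𝓝 (ψ (fun i => a i.castSucc) *
        (C * ∫ y in Ioi d, y ^ (m - 1) * exp (-y ^ 2 / 2)))) := by
    have h := tendsto_integral_localPosterior hm ha hψ_meas hψ_bdd hψ_cont hT hN hfreq hd
    rwa [hradial, Module.finrank_fin_fun, setIntegral_Ioi_smul_indicator_Ici _ _ hd] at h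
  have htotal := (integral_pow_mul_exp_neg_sq_div_two_pos (m - 1)).ne'
  have hratio := (hlim hc).div (hlim le_rfl) (mul_ne_zero hψ_ne (mul_ne_zero hC.ne' htotal))
  rw [mul_div_mul_left _ _ hψ_ne, mul_div_mul_left _ _ hC.ne'] at hratio
  refine hratio.congr' ?_
  filter_upwards [eventually_counts_pos ha hfreq] with x ⟨hTx, hNx⟩
  have hconst : (∏ i, ((N x i : ℝ) / T x) ^ N x i) / √(T x) ^ m ≠ 0 :=
    div_ne_zero (Finset.prod_ne_zero_iff.2 fun i _ => by have := hNx i; positivity) (by positivity)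
  change _ = (∫ p in chiSqRegion (T x) (N x) c, _) / _
  rw [← chiSqRegion_zero (T x) (N x), setIntegral_chiSqRegion_eq hTx hNx,
    setIntegral_chiSqRegion_eq hTx hNx, mul_div_mul_left _ _ hconst]
  rfl

/-- Neyman's (1930/1932) a-posteriori analogue of the chi-square test: under
the multinomial posterior (with prior density `ψ`) for the probability vector
`p` given observed counts `N n i` with relative frequencies converging to
`a_i ∈ (0,1)`, the posterior probability that
`χ̃² = ∑ (N n i − p_i n)²/(N n i) ≥ c²` converges to the chi distribution tail
with `t − 1 = m` degrees of freedom. -/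
theorem neyman_posterior_chisq (m : ℕ) (hm : 1 ≤ m)
    (a : Fin (m + 1) → ℝ) (ha : ∀ i, a i ∈ Set.Ioo (0:ℝ) 1) (hsum : ∑ i, a i = 1)
    (ψ : (Fin m → ℝ) → ℝ) (hψ_meas : Measurable ψ)
    (hψ_nonneg : ∀ x, 0 ≤ ψ x) (hψ_bdd : ∃ B, ∀ x, ψ x ≤ B)
    (hψ_cont : ContinuousAt ψ (fun i => a i.castSucc))
    (hψ_pos : 0 < ψ (fun i => a i.castSucc))
    (N : ℕ → Fin (m + 1) → ℕ)
    (hN : ∀ n, ∑ i, N n i = n)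
    (hfreq : ∀ i, Tendsto (fun n : ℕ => (N n i : ℝ) / n) atTop (nhds (a i)))
    (c : ℝ) (hc : 0 < c) :
    Tendsto (fun n : ℕ =>
      (∫ p in {p : Fin m → ℝ | ((∀ i, 0 < p i) ∧ ∑ i, p i < 1) ∧
            c ^ 2 ≤ ∑ i, ((N n i : ℝ) - fullProb m p i * n) ^ 2 / (N n i : ℝ)},
          ψ p * ∏ i, fullProb m p i ^ N n i) /
      (∫ p in {p : Fin m → ℝ | (∀ i, 0 < p i) ∧ ∑ i, p i < 1},
          ψ p * ∏ i, fullProb m p i ^ N n i))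
      atTop
      (nhds ((∫ x in Set.Ioi c, x ^ (m - 1) * Real.exp (-x ^ 2 / 2)) /
             (∫ x in Set.Ioi (0:ℝ), x ^ (m - 1) * Real.exp (-x ^ 2 / 2)))) := by
  obtain ⟨B, hB⟩ := hψ_bdd
  exact neyman_posterior_chisq_general hm (fun i => (ha i).1) hψ_meas
    (fun p => (abs_of_nonneg (hψ_nonneg p)).trans_le (hB p)) hψ_cont hψ_pos.ne' tendsto_id hN hfreq
    hc.le
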